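/- For every constant C < 3 there exists a graph G with gt(G)/gpack(G) > C. More precisely, for every ε > 0 there exists n such that gt(K_n □ K_n)/gpack(K_n □ K_n) ≥ 3 − ε. -/

import Mathlib

open SimpleGraph

/-- A geodesic (shortest path) in `G`: a path whose length equals the distance
between its endpoints. -/
def IsGeodesic {V : Type*} (G : SimpleGraph V) {u v : V} (p : G.Walk u v) : Prop :=
  p.IsPath ∧ p.length = G.dist u v

/-- A maximal geodesic: a geodesic that is not contained as a subpath of any longer
geodesic, equivalently it cannot be extended at either end to a longer geodesic. -/
def IsMaxGeodesic {V : Type*} (G : SimpleGraph V) {u v : V} (p : G.Walk u v) : Prop :=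
  IsGeodesic G p ∧
  (∀ w (h : G.Adj w u), ¬ IsGeodesic G (SimpleGraph.Walk.cons h p)) ∧
  (∀ w (h : G.Adj v w), ¬ IsGeodesic G (p.concat h))

/-- A set of vertices that is the vertex set of some maximal geodesic of `G`. -/
def IsMaxGeodesicSet {V : Type*} (G : SimpleGraph V) (s : Set V) : Prop :=
  ∃ (u v : V) (p : G.Walk u v), IsMaxGeodesic G p ∧ s = {x | x ∈ p.support}

/-- A geodesic packing: a family of pairwise vertex-disjoint maximal geodesics. -/
def IsGeodesicPacking {V : Type*} (G : SimpleGraph V) (P : Set (Set V)) : Prop :=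
  (∀ s ∈ P, IsMaxGeodesicSet G s) ∧ P.Pairwise Disjoint

/-- The geodesic packing number `gpack(G)`. -/
noncomputable def gpackNum {V : Type*} (G : SimpleGraph V) : ℕ :=
  sSup {k | ∃ P : Finset (Set V), IsGeodesicPacking G ↑P ∧ P.card = k}

/-- A geodesic transversal: a vertex set hitting every maximal geodesic. -/
def IsGeodesicTransversal {V : Type*} (G : SimpleGraph V) (S : Set V) : Prop :=
  ∀ s, IsMaxGeodesicSet G s → (S ∩ s).Nonempty

/-- The geodesic transversal number `gt(G)`. -/
noncomputable def gtransNum {V : Type*} (G : SimpleGraph V) : ℕ :=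
  sInf {k | ∃ S : Finset V, IsGeodesicTransversal G ↑S ∧ S.card = k}

/-- The rook's graph `K_α □ K_β`. -/
abbrev rookGraph (α β : Type*) : SimpleGraph (α × β) :=
  (⊤ : SimpleGraph α) □ (⊤ : SimpleGraph β)

section Geodesic

variable {V : Type*} {G : SimpleGraph V}

theorem isGeodesic_of_length_eq_dist {u v : V} {p : G.Walk u v} (h : p.length = G.dist u v) :
    IsGeodesic G p :=
  ⟨p.isPath_of_length_eq_dist h, h⟩

theorem dist_eq_two_of_walk {u v : V} (p : G.Walk u v) (hp : p.length = 2) (hne : u ≠ v)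
    (hadj : ¬ G.Adj u v) : G.dist u v = 2 :=
  le_antisymm (hp ▸ dist_le p) (p.reachable.one_lt_dist_of_ne_of_not_adj hne hadj)

theorem IsMaxGeodesicSet.nonempty {s : Set V} (hs : IsMaxGeodesicSet G s) : s.Nonempty := by
  obtain ⟨u, v, p, -, rfl⟩ := hs
  exact ⟨u, p.start_mem_support⟩

/-- A packing by maximal geodesics with at least `k` vertices each has at most `|V| / k` members. -/
theorem IsGeodesicPacking.card_mul_le [Fintype V] {k : ℕ}
    (hk : ∀ s, IsMaxGeodesicSet G s → k ≤ s.ncard) {P : Finset (Set V)}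
    (hP : IsGeodesicPacking G (P : Set (Set V))) : P.card * k ≤ Fintype.card V := by
  classical
  have hdisj : (P : Set (Set V)).PairwiseDisjoint fun s => s.toFinset := by
    intro s hs t ht hst
    simpa [Function.onFun, Set.disjoint_toFinset] using hP.2 hs ht hst
  calc P.card * k = ∑ _s ∈ P, k := by simp
    _ ≤ ∑ s ∈ P, s.toFinset.card := Finset.sum_le_sum fun s hs => by
        rw [← Set.ncard_eq_toFinset_card']
        exact hk s (hP.1 s hs)
    _ = (P.biUnion fun s => s.toFinset).card := (Finset.card_biUnion hdisj).symm
    _ ≤ Fintype.card V := Finset.card_le_univ _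

theorem gpackNum_mul_le [Fintype V] {k : ℕ} (hk : ∀ s, IsMaxGeodesicSet G s → k ≤ s.ncard) :
    gpackNum G * k ≤ Fintype.card V := by
  classical
  have hmem : gpackNum G ∈ {k | ∃ P : Finset (Set V), IsGeodesicPacking G ↑P ∧ P.card = k} := by
    refine Nat.sSup_mem ⟨0, ∅, ⟨by simp, by simp⟩, rfl⟩ ⟨Fintype.card (Set V), ?_⟩
    rintro _ ⟨P, -, rfl⟩
    exact Finset.card_le_univ P
  obtain ⟨P, hP, hcard⟩ := hmem
  exact hcard ▸ hP.card_mul_le hk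

theorem gpackNum_pos [Fintype V] {s : Set V} (hs : IsMaxGeodesicSet G s) : 0 < gpackNum G := by
  classical
  refine le_csSup ⟨Fintype.card (Set V), ?_⟩ ⟨{s}, ⟨by simpa using hs, by simp⟩, rfl⟩
  rintro _ ⟨P, -, rfl⟩
  exact Finset.card_le_univ P

theorem exists_isGeodesicTransversal_card_eq_gtransNum [Fintype V] :
    ∃ S : Finset V, IsGeodesicTransversal G (S : Set V) ∧ S.card = gtransNum G :=
  Nat.sInf_mem (s := {k | ∃ S : Finset V, IsGeodesicTransversal G ↑S ∧ S.card = k})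
    ⟨_, Finset.univ, fun s hs => by simpa using hs.nonempty, rfl⟩

end Geodesic

section Rook

variable {α β : Type*}

theorem rookGraph_dist_le_two (u v : α × β) : (rookGraph α β).dist u v ≤ 2 := by
  obtain ⟨a, b⟩ := u
  obtain ⟨c, d⟩ := v
  by_cases hac : a = c <;> by_cases hbd : b = d
  · subst hac hbd
    simp
  · subst hac
    have h : (rookGraph α β).Adj (a, b) (a, d) := by simp [hbd]
    rw [dist_eq_one_iff_adj.2 h]
    norm_num
  · subst hbd
    have h : (rookGraph α β).Adj (a, b) (c, b) := by simp [hac]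
    rw [dist_eq_one_iff_adj.2 h]
    norm_num
  · have h₁ : (rookGraph α β).Adj (a, b) (a, d) := by simp [hbd]
    have h₂ : (rookGraph α β).Adj (a, d) (c, d) := by simp [hac]
    exact dist_le (.cons h₁ (.cons h₂ .nil))

/-- An L-shaped triple of cells is the vertex set of a maximal geodesic of the rook's graph. -/
theorem rookGraph_isMaxGeodesicSet {a c : α} {b d : β} (hac : a ≠ c) (hbd : b ≠ d) :
    IsMaxGeodesicSet (rookGraph α β) {(a, b), (a, d), (c, d)} := by
  have h₁ : (rookGraph α β).Adj (a, b) (a, d) := by simp [hbd]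
  have h₂ : (rookGraph α β).Adj (a, d) (c, d) := by simp [hac]
  refine ⟨_, _, .cons h₁ (.cons h₂ .nil), ⟨isGeodesic_of_length_eq_dist ?_, ?_, ?_⟩, ?_⟩
  · exact (dist_eq_two_of_walk (.cons h₁ (.cons h₂ .nil)) rfl (by simp [hac])
      (by simp [hac, hbd])).symm
  · intro w h hg
    have := rookGraph_dist_le_two w (c, d)
    have := hg.2
    simp only [Walk.length_cons, Walk.length_nil] at this
    omega
  · intro w h hg
    have := rookGraph_dist_le_two (a, b) w
    have := hg.2
    simp only [Walk.length_concat, Walk.length_cons, Walk.length_nil] at this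
    omega
  · ext x
    simp

theorem rookGraph_exists_adj_not_adj [Nontrivial α] [Nontrivial β] {u v : α × β}
    (h : (rookGraph α β).Adj u v) :
    ∃ w, (rookGraph α β).Adj v w ∧ u ≠ w ∧ ¬ (rookGraph α β).Adj u w := by
  obtain ⟨a, b⟩ := u
  obtain ⟨c, d⟩ := v
  simp only [boxProd_adj, top_adj] at h
  rcases h with ⟨hac, rfl⟩ | ⟨hbd, rfl⟩
  · obtain ⟨e, he⟩ := exists_ne b
    exact ⟨(c, e), by simp [he.symm], by simp [hac], by simp [hac, he.symm]⟩
  · obtain ⟨e, he⟩ := exists_ne a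
    exact ⟨(e, d), by simp [he.symm], by simp [hbd], by simp [hbd, he.symm]⟩

theorem rookGraph_two_le_length [Nontrivial α] [Nontrivial β] {u v : α × β}
    {p : (rookGraph α β).Walk u v} (hp : IsMaxGeodesic (rookGraph α β) p) : 2 ≤ p.length := by
  by_contra! hlt
  match p, hlt, hp with
  | .nil, _, hp =>
    obtain ⟨e, he⟩ := exists_ne u.1
    have h : (rookGraph α β).Adj u (e, u.2) := by simp [he.symm]
    refine hp.2.2 _ h (isGeodesic_of_length_eq_dist ?_)
    simpa using (dist_eq_one_iff_adj.2 h).symm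
  | .cons h .nil, _, hp =>
    obtain ⟨w, hw, hne, hnadj⟩ := rookGraph_exists_adj_not_adj h
    exact hp.2.2 w hw (isGeodesic_of_length_eq_dist
      (dist_eq_two_of_walk ((Walk.cons h .nil).concat hw) rfl hne hnadj).symm)
  | .cons _ (.cons _ q), hlt, _ =>
    simp only [Walk.length_cons] at hlt
    omega

theorem rookGraph_three_le_ncard [Nontrivial α] [Nontrivial β] {s : Set (α × β)}
    (hs : IsMaxGeodesicSet (rookGraph α β) s) : 3 ≤ s.ncard := by
  classical
  obtain ⟨u, v, p, hp, rfl⟩ := hs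
  have hcoe : {x | x ∈ p.support} = (p.support.toFinset : Set (α × β)) := by
    ext x
    simp
  rw [hcoe, Set.ncard_coe_finset, List.toFinset_card_of_nodup hp.1.1.support_nodup,
    Walk.length_support]
  have := rookGraph_two_le_length hp
  omega

/-- Every cell missed by a transversal is the only missed cell of its row or of its column. -/
theorem rookGraph_card_compl_le [Fintype α] [Fintype β] [DecidableEq α] [DecidableEq β]
    {S : Finset (α × β)} (hS : IsGeodesicTransversal (rookGraph α β) (S : Set (α × β))) :
    Sᶜ.card ≤ Fintype.card α + Fintype.card β := by
  have key : ∀ a c b d, (a, b) ∉ S → (a, d) ∉ S → (c, d) ∉ S → b ≠ d → a = c := by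
    intro a c b d h₁ h₂ h₃ hbd
    by_contra hac
    obtain ⟨x, hxS, hx⟩ := hS _ (rookGraph_isMaxGeodesicSet hac hbd)
    rcases hx with rfl | rfl | rfl <;> simp_all
  classical
  rw [← Fintype.card_sum, ← Finset.card_univ]
  refine Finset.card_le_card_of_injOn
    (fun x => if ∃ b, (x.1, b) ∉ S ∧ b ≠ x.2 then Sum.inr x.2 else Sum.inl x.1)
    (fun _ _ => by simp) ?_
  rintro ⟨a, b⟩ hab ⟨c, d⟩ hcd heq
  simp only [Finset.coe_compl, Set.mem_compl_iff, Finset.mem_coe] at hab hcd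
  dsimp only at heq
  split_ifs at heq with h₁ h₂ h₂
  · obtain ⟨e, he, hne⟩ := h₁
    obtain rfl : b = d := Sum.inr.inj heq
    rw [key a c e b he hab hcd hne]
  · obtain rfl : a = c := Sum.inl.inj heq
    by_contra hne
    exact h₁ ⟨d, hcd, fun h => hne (by simp [h])⟩

theorem rookGraph_card_le_gtransNum [Fintype α] [Fintype β] :
    Fintype.card α * Fintype.card β ≤
      gtransNum (rookGraph α β) + (Fintype.card α + Fintype.card β) := by
  classical
  obtain ⟨S, hS, hcard⟩ := exists_isGeodesicTransversal_card_eq_gtransNum (G := rookGraph α β)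
  rw [← hcard, ← Fintype.card_prod, ← Finset.card_add_card_compl S]
  exact Nat.add_le_add_left (rookGraph_card_compl_le hS) _

end Rook

theorem ratio_unbounded_below_three :
    ∀ ε : ℝ, 0 < ε → ∃ n : ℕ,
      (3 : ℝ) - ε ≤ (gtransNum ((⊤ : SimpleGraph (Fin n)) □ (⊤ : SimpleGraph (Fin n))) : ℝ) / (gpackNum ((⊤ : SimpleGraph (Fin n)) □ (⊤ : SimpleGraph (Fin n))) : ℝ) := by
  intro ε hε
  obtain ⟨m, hm⟩ := exists_nat_gt (6 / ε)
  refine ⟨m + 2, ?_⟩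
  have hpack : gpackNum (rookGraph (Fin (m + 2)) (Fin (m + 2))) * 3 ≤ (m + 2) * (m + 2) := by
    simpa using gpackNum_mul_le (G := rookGraph (Fin (m + 2)) (Fin (m + 2)))
      fun s hs => rookGraph_three_le_ncard hs
  have htrans : (m + 2) * (m + 2) ≤
      gtransNum (rookGraph (Fin (m + 2)) (Fin (m + 2))) + ((m + 2) + (m + 2)) := by
    simpa using rookGraph_card_le_gtransNum (α := Fin (m + 2)) (β := Fin (m + 2))
  have hpos : 0 < gpackNum (rookGraph (Fin (m + 2)) (Fin (m + 2))) :=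
    gpackNum_pos (rookGraph_isMaxGeodesicSet (zero_ne_one) (zero_ne_one))
  generalize gpackNum (rookGraph (Fin (m + 2)) (Fin (m + 2))) = p at *
  generalize gtransNum (rookGraph (Fin (m + 2)) (Fin (m + 2))) = t at *
  have hpack' : (p : ℝ) * 3 ≤ (m + 2) * (m + 2) := by exact_mod_cast hpack
  have htrans' : ((m : ℝ) + 2) * (m + 2) ≤ t + ((m + 2) + (m + 2)) := by exact_mod_cast htrans
  have hpos' : (0 : ℝ) < p := by exact_mod_cast hpos
  have hm' : 6 < m * ε := (div_lt_iff₀ hε).1 hm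
  rw [le_div_iff₀ hpos']
  rcases le_total ε 3 with h3 | h3
  · nlinarith [mul_le_mul_of_nonneg_left hpack' (sub_nonneg.2 h3),
      mul_le_mul_of_nonneg_left hm'.le (by positivity : (0 : ℝ) ≤ m + 2)]
  · have ht : (0 : ℝ) ≤ t := t.cast_nonneg
    nlinarith [mul_nonneg (sub_nonneg.2 h3) hpos'.le]
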